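/- Let q = (q₁,q₂) ∈ ℂ². The binary cubic form F_{(q₁,q₂)} vanishes identically (i.e. F_{(q₁,q₂)}(λ₁,λ₂) = 0 for all λ₁, λ₂ ∈ ℂ) if and only if q₂ = 0 and q₁ ∈ {−1, 1/2 + (√3/2)i, 1/2 − (√3/2)i}. Equivalently, the Fermat cubic surface contains exactly three twistor lines, namely the fibres over the quaternions −1, 1/2 + (√3/2)i and 1/2 − (√3/2)i. -/

import Mathlib

open Complex

/-- The restriction of the Fermat cubic `z₁³+z₂³+z₃³+z₄³` to the twistor fibre over the
quaternion `q = q₁ + q₂·j`, as a binary cubic form in `(λ₁, λ₂)`. -/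
noncomputable def fermatFibreForm (q₁ q₂ l₁ l₂ : ℂ) : ℂ :=
  (l₁ * q₁ - l₂ * (starRingEnd ℂ) q₂) ^ 3 + (l₁ * q₂ + l₂ * (starRingEnd ℂ) q₁) ^ 3
    + l₁ ^ 3 + l₂ ^ 3

open scoped ComplexConjugate

theorem pow_three_eq_neg_one_iff {K : Type*} [Field K] [NeZero (2 : K)] {s : K}
    (hs : s * s = -3) (x : K) :
    x ^ 3 = -1 ↔ x = -1 ∨ x = (1 + s) / 2 ∨ x = (1 - s) / 2 := by
  have hdiscrim : discrim (1 : K) (-1) 1 = s * s := by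
    rw [discrim, hs]
    norm_num
  have hfactor : x ^ 3 - -1 = (x - -1) * (1 * (x * x) + -1 * x + 1) := by ring
  rw [← sub_eq_zero, hfactor, mul_eq_zero, sub_eq_zero,
    quadratic_eq_zero_iff one_ne_zero hdiscrim, neg_neg, mul_one]

theorem sqrt_three_mul_I_mul_self : (√3 * I : ℂ) * (√3 * I) = -3 := by
  rw [mul_mul_mul_comm, I_mul_I, ← ofReal_mul, Real.mul_self_sqrt zero_le_three]
  norm_num

theorem complex_pow_three_eq_neg_one_iff (z : ℂ) :
    z ^ 3 = -1 ↔ z = -1 ∨ z = 1 / 2 + ((√3 / 2 : ℝ) : ℂ) * I ∨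
      z = 1 / 2 - ((√3 / 2 : ℝ) : ℂ) * I := by
  rw [pow_three_eq_neg_one_iff sqrt_three_mul_I_mul_self, add_div, sub_div,
    ofReal_div, ofReal_ofNat, div_mul_eq_mul_div]

theorem fermatFibreForm_expand (q₁ q₂ l₁ l₂ : ℂ) :
    fermatFibreForm q₁ q₂ l₁ l₂ =
      (q₁ ^ 3 + q₂ ^ 3 + 1) * l₁ ^ 3 +
        3 * (q₂ ^ 2 * conj q₁ - q₁ ^ 2 * conj q₂) * l₁ ^ 2 * l₂ +
        3 * conj (q₂ ^ 2 * conj q₁ + q₁ ^ 2 * conj q₂) * l₁ * l₂ ^ 2 +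
        conj (q₁ ^ 3 - q₂ ^ 3 + 1) * l₂ ^ 3 := by
  simp only [fermatFibreForm, map_add, map_sub, map_mul, map_pow, map_one, conj_conj]
  ring

theorem forall_fermatFibreForm_eq_zero_iff (q₁ q₂ : ℂ) :
    (∀ l₁ l₂ : ℂ, fermatFibreForm q₁ q₂ l₁ l₂ = 0) ↔ q₂ = 0 ∧ q₁ ^ 3 = -1 := by
  constructor
  · intro h
    have hleading : q₁ ^ 3 + q₂ ^ 3 + 1 = 0 := by
      simpa [fermatFibreForm_expand] using h 1 0
    have htrailing : conj (q₁ ^ 3 - q₂ ^ 3 + 1) = 0 := by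
      simpa [fermatFibreForm_expand] using h 0 1
    rw [map_eq_zero] at htrailing
    have hq₂ : q₂ ^ 3 = 0 := by linear_combination (hleading - htrailing) / 2
    exact ⟨eq_zero_of_pow_eq_zero hq₂, by linear_combination (hleading + htrailing) / 2⟩
  · rintro ⟨rfl, hq₁⟩ l₁ l₂
    simp [fermatFibreForm_expand, hq₁]

/-- The binary cubic obtained by restricting the Fermat cubic to the twistor fibre over
`q = q₁ + q₂·j` vanishes identically (i.e. the fibre is a twistor line of the Fermat cubic)
if and only if `q₂ = 0` and `q₁ ∈ {−1, 1/2 + (√3/2)i, 1/2 − (√3/2)i}`. -/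
theorem fermat_twistor_lines (q₁ q₂ : ℂ) :
    (∀ l₁ l₂ : ℂ, fermatFibreForm q₁ q₂ l₁ l₂ = 0) ↔
      (q₂ = 0 ∧ (q₁ = -1 ∨ q₁ = 1 / 2 + ((Real.sqrt 3 / 2 : ℝ) : ℂ) * Complex.I ∨
        q₁ = 1 / 2 - ((Real.sqrt 3 / 2 : ℝ) : ℂ) * Complex.I)) := by
  rw [forall_fermatFibreForm_eq_zero_iff, complex_pow_three_eq_neg_one_iff]
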